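/- For every g ∈ D and every polynomial f with g + f ∈ ⟨𝓕⟩, one has g ≼_lex f, where ≼_lex is extended to polynomials as described (in particular g ∉ ⟨𝓕⟩). -/

import Mathlib

open MvPolynomial

/-- Monomials in the variables `σ`, represented by their exponent vectors. -/
abbrev Mon (σ : Type*) := σ →₀ ℕ

/-- A monomial order: a total order on monomials such that `1 ≼ t` for every monomial `t`
and `t ≼ u → t·v ≼ u·v` (written additively on exponent vectors). -/
structure MonOrd (σ : Type*) where
  le : Mon σ → Mon σ → Prop
  le_refl : ∀ t, le t t
  le_trans : ∀ t u v, le t u → le u v → le t v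
  le_antisymm : ∀ t u, le t u → le u t → t = u
  le_total : ∀ t u, le t u ∨ le u t
  zero_le : ∀ t, le 0 t
  add_le_add : ∀ t u v, le t u → le (t + v) (u + v)

/-- Strict version of a monomial order. -/
def MonOrd.lt {σ : Type*} (μ : MonOrd σ) (t u : Mon σ) : Prop := μ.le t u ∧ t ≠ u

/-- The extension of a monomial order (given by the relation `r` on monomials) to polynomials:
`g ≼ f` iff `g = f` or the greatest monomial on which `f` and `g` differ occurs in `f`.
(This is the closed form of the recursive definition: `g ≼ f` iff `g = f`, or
`HT g ≺ HT f`, or `HT g = HT f` and `g - HT g ≼ f - HT f`, with `0` the least polynomial.) -/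
def polyLe {σ : Type*} (r : Mon σ → Mon σ → Prop) (g f : MvPolynomial σ (ZMod 2)) : Prop :=
  g = f ∨ ∃ t, t ∈ f.support ∧ t ∉ g.support ∧
    ∀ u : Mon σ, ((u ∈ f.support ∧ u ∉ g.support) ∨ (u ∈ g.support ∧ u ∉ f.support)) → r u t

/-- Strict extension of a monomial order to polynomials. -/
def polyLt {σ : Type*} (r : Mon σ → Mon σ → Prop) (g f : MvPolynomial σ (ZMod 2)) : Prop :=
  polyLe r g f ∧ g ≠ f

/-- `S_F`: the set of non-residual polynomials with respect to `F` and the monomial order `r`,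
i.e. those `f` admitting a `g` with `f + g ∈ ⟨F⟩` and `g ≺ f`. -/
def SF {σ : Type*} (r : Mon σ → Mon σ → Prop) (F : Set (MvPolynomial σ (ZMod 2))) :
    Set (MvPolynomial σ (ZMod 2)) :=
  {f | ∃ g, f + g ∈ Ideal.span F ∧ polyLt r g f}

/-- `t` is the head monomial (`r`-greatest monomial) of the polynomial `f`. -/
def IsHT {σ : Type*} (r : Mon σ → Mon σ → Prop) (f : MvPolynomial σ (ZMod 2)) (t : Mon σ) :
    Prop :=
  t ∈ f.support ∧ ∀ u ∈ f.support, r u t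

/-- `HT(S)`: the set of head monomials (as polynomials) of the nonzero elements of `S`. -/
def HTset {σ : Type*} (r : Mon σ → Mon σ → Prop) (S : Set (MvPolynomial σ (ZMod 2))) :
    Set (MvPolynomial σ (ZMod 2)) :=
  {p | ∃ f ∈ S, f ≠ 0 ∧ ∃ t, IsHT r f t ∧ p = monomial t 1}

/-- The divisibility (componentwise) order `◁` on monomials. -/
def triMon {σ : Type*} (t u : Mon σ) : Prop := ∀ x, t x ≤ u x

/-- The order `◁` on polynomials: `p ◁ q` iff there is an injective map `φ` from the
monomials of `p` to the monomials of `q` with `t ◁ φ t` for each monomial `t` of `p`. -/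
def triPoly {σ : Type*} (p q : MvPolynomial σ (ZMod 2)) : Prop :=
  ∃ φ : Mon σ → Mon σ, Set.InjOn φ ↑p.support ∧ ∀ t ∈ p.support, φ t ∈ q.support ∧ triMon t (φ t)

/-- Upward closure with respect to `◁`. -/
def upClo {σ : Type*} (A : Set (MvPolynomial σ (ZMod 2))) : Set (MvPolynomial σ (ZMod 2)) :=
  {q | ∃ p ∈ A, triPoly p q}

/-- `Min_◁(A)`: the `◁`-minimal elements of `A`. -/
def minTri {σ : Type*} (A : Set (MvPolynomial σ (ZMod 2))) : Set (MvPolynomial σ (ZMod 2)) :=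
  {p | p ∈ A ∧ ∀ q ∈ A, triPoly q p → q = p}

/-- `G` is a Gröbner basis of the ideal `I` with respect to the monomial order `r`. -/
def IsGB {σ : Type*} (r : Mon σ → Mon σ → Prop) (G : Finset (MvPolynomial σ (ZMod 2)))
    (I : Ideal (MvPolynomial σ (ZMod 2))) : Prop :=
  (↑G : Set (MvPolynomial σ (ZMod 2))) ⊆ ↑I ∧
    Ideal.span (↑G : Set (MvPolynomial σ (ZMod 2))) = I ∧
    Ideal.span (HTset r (↑I : Set (MvPolynomial σ (ZMod 2)))) = Ideal.span (HTset r ↑G)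

/-- `G` is a reduced Gröbner basis of `I` with respect to `r`. -/
def IsReducedGB {σ : Type*} (r : Mon σ → Mon σ → Prop) (G : Finset (MvPolynomial σ (ZMod 2)))
    (I : Ideal (MvPolynomial σ (ZMod 2))) : Prop :=
  IsGB r G I ∧ ∀ f ∈ G, ¬ ∀ t ∈ f.support,
    (monomial t 1 : MvPolynomial σ (ZMod 2)) ∈
      Ideal.span (HTset r ((↑G : Set (MvPolynomial σ (ZMod 2))) \ {f}))

/-- The variable set `X`: the special variables `s, ℓ, c, c̄, b, b̄` together with, for each
`0 ≤ i ≤ n`, the variables `s_i, f_i, q_{ji}, c_{ji}, b_{ji}` (`1 ≤ j ≤ 4`, encoded by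
`j : Fin 4`) and their barred copies (`bar = true`). -/
inductive MVar (n : ℕ) : Type where
  | vs | vl | vc | vcb | vb | vbb
  | vS (bar : Bool) (i : Fin (n+1))
  | vF (bar : Bool) (i : Fin (n+1))
  | vQ (bar : Bool) (j : Fin 4) (i : Fin (n+1))
  | vC (bar : Bool) (j : Fin 4) (i : Fin (n+1))
  | vB (bar : Bool) (j : Fin 4) (i : Fin (n+1))
deriving DecidableEq

open MVar

abbrev MPoly (n : ℕ) := MvPolynomial (MVar n) (ZMod 2)

/-- `e(n) = 2^(2^n)`. -/
def en (n : ℕ) : ℕ := 2 ^ 2 ^ n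

/-- The set `P_0` (barred copy if `bar = true`). -/
def P0 (n : ℕ) (bar : Bool) : Set (MPoly n) :=
  {p | ∃ j : Fin 4, p =
    X (vB bar j 0) ^ 2 * X (vC bar j 0) * X (vF bar 0) + X (vC bar j 0) * X (vS bar 0)}

/-- The set `P_m` for `m = i+1`, `i : Fin n` (barred copy if `bar = true`).
Here `i.succ` plays the role of `m` and `i.castSucc` the role of `m-1`; the indices
`1,2,3,4` of the paper are encoded as `0,1,2,3 : Fin 4`. -/
def Pm (n : ℕ) (bar : Bool) (i : Fin n) : Set (MPoly n) :=
  ({ X (vQ bar 0 i.succ) * X (vC bar 0 i.castSucc) * X (vS bar i.castSucc) + X (vS bar i.succ),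
    X (vQ bar 1 i.succ) * X (vC bar 1 i.castSucc) * X (vS bar i.castSucc)
      + X (vQ bar 0 i.succ) * X (vB bar 0 i.castSucc) * X (vC bar 0 i.castSucc)
        * X (vF bar i.castSucc),
    X (vQ bar 2 i.succ) * X (vC bar 2 i.castSucc) * X (vF bar i.castSucc)
      + X (vQ bar 1 i.succ) * X (vC bar 1 i.castSucc) * X (vF bar i.castSucc),
    X (vQ bar 2 i.succ) * X (vB bar 0 i.castSucc) * X (vC bar 2 i.castSucc)
        * X (vS bar i.castSucc)
      + X (vQ bar 1 i.succ) * X (vB bar 3 i.castSucc) * X (vC bar 1 i.castSucc)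
        * X (vS bar i.castSucc),
    X (vQ bar 3 i.succ) * X (vB bar 3 i.castSucc) * X (vC bar 3 i.castSucc)
        * X (vF bar i.castSucc)
      + X (vQ bar 2 i.succ) * X (vC bar 2 i.castSucc) * X (vS bar i.castSucc),
    X (vQ bar 3 i.succ) * X (vC bar 3 i.castSucc) * X (vS bar i.castSucc)
      + X (vF bar i.succ) } : Set (MPoly n))
  ∪ {p | ∃ j : Fin 4, p =
      X (vQ bar 1 i.succ) * X (vB bar 2 i.castSucc) * X (vB bar j i.succ) * X (vC bar j i.succ)
          * X (vF bar i.castSucc)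
        + X (vQ bar 1 i.succ) * X (vB bar 1 i.castSucc) * X (vC bar j i.succ)
          * X (vF bar i.castSucc)}

/-- The set `P = P_0 ∪ P_1 ∪ ⋯ ∪ P_n`; for `bar = true` this is the barred copy `P̄`
(the image of `P` under the substitution replacing each variable by its barred version). -/
def PP (n : ℕ) (bar : Bool) : Set (MPoly n) := P0 n bar ∪ ⋃ i : Fin n, Pm n bar i

/-- The set `G` of seven extra binomials. -/
def GG (n : ℕ) : Set (MPoly n) :=
  { X (vB false 3 (Fin.last n)) * X vl * X vb + X vl * X vc,
    X (vB false 3 (Fin.last n)) * X vl * X vbb + X vl * X vcb,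
    X (vC false 3 (Fin.last n)) * X (vF false (Fin.last n)) + X vl,
    X (vC true 3 (Fin.last n)) * X (vF true (Fin.last n))
      + X (vC false 3 (Fin.last n)) * X (vS false (Fin.last n)),
    X (vB true 3 (Fin.last n)) * X (vC false 3 (Fin.last n)) * X (vS false (Fin.last n))
      + X (vC false 3 (Fin.last n)) * X (vS false (Fin.last n)) * X vb,
    X (vB true 3 (Fin.last n)) * X (vC false 3 (Fin.last n)) * X (vS false (Fin.last n))
      + X (vC false 3 (Fin.last n)) * X (vS false (Fin.last n)) * X vbb,
    X (vC true 3 (Fin.last n)) * X (vS true (Fin.last n)) + X vs }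

/-- The set `𝓕 = P ∪ P̄ ∪ G`. -/
def FF (n : ℕ) : Set (MPoly n) := PP n false ∪ PP n true ∪ GG n

/-- The set `C = {ℓ c̄^{m1} c^{m2} : m1 + m2 = e(n)}` of monomials. -/
def Cmon (n : ℕ) : Set (Mon (MVar n)) :=
  {α | ∃ m1 m2 : ℕ, m1 + m2 = en n ∧
    α = Finsupp.single vl 1 + Finsupp.single vcb m1 + Finsupp.single vc m2}

/-- The set `D = {ℓ^j c̄^{m1} c^{m2} : j ∈ {0,1}, j + m1 + m2 ≤ e(n)}` of monomials. -/
def Dmon (n : ℕ) : Set (Mon (MVar n)) :=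
  {α | ∃ j m1 m2 : ℕ, j ≤ 1 ∧ j + m1 + m2 ≤ en n ∧
    α = Finsupp.single vl j + Finsupp.single vcb m1 + Finsupp.single vc m2}

/-- An injective rank function on the variables realizing the variable ordering
(from least to greatest): `s, c, c̄, ℓ, b, b̄`; then `s_0,…,s_n`; `f_0,…,f_n`;
`c_{10},…,c_{1n}; …; c_{40},…,c_{4n}`; `b_{10},…,b_{4n}`; `q_{10},…,q_{4n}`;
then the barred variables in the same pattern. -/
def vrank (n : ℕ) : MVar n → ℕ
  | .vs => 0
  | .vc => 1
  | .vcb => 2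
  | .vl => 3
  | .vb => 4
  | .vbb => 5
  | .vS bar i => 6 + (cond bar (14 * (n+1)) 0) + (i : ℕ)
  | .vF bar i => 6 + (cond bar (14 * (n+1)) 0) + (n+1) + (i : ℕ)
  | .vC bar j i => 6 + (cond bar (14 * (n+1)) 0) + 2*(n+1) + (j : ℕ)*(n+1) + (i : ℕ)
  | .vB bar j i => 6 + (cond bar (14 * (n+1)) 0) + 6*(n+1) + (j : ℕ)*(n+1) + (i : ℕ)
  | .vQ bar j i => 6 + (cond bar (14 * (n+1)) 0) + 10*(n+1) + (j : ℕ)*(n+1) + (i : ℕ)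

/-- The lexicographic monomial order on `X`: `t ≼_lex u` iff `t = u` or the exponents differ
somewhere and at the greatest variable (w.r.t. `vrank`) where they differ, the exponent of
`t` is smaller. -/
def lexLe (n : ℕ) (t u : Mon (MVar n)) : Prop :=
  t = u ∨ ∃ x : MVar n, t x < u x ∧ ∀ y : MVar n, vrank n x < vrank n y → t y = u y

/-- The total degree of a monomial. -/
def mdeg {σ : Type*} (t : Mon σ) : ℕ := t.sum fun _ k => k

/-- The degree lexicographic monomial order. -/
def degLexLe (n : ℕ) (t u : Mon (MVar n)) : Prop :=
  mdeg t < mdeg u ∨ (mdeg t = mdeg u ∧ lexLe n t u)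

/-- Weighted degree of a monomial with respect to a weight map `w`. -/
noncomputable def wdeg {n : ℕ} (w : MVar n → ℝ) (t : Mon (MVar n)) : ℝ :=
  t.sum fun x k => (k : ℝ) * w x

/-- The weighted monomial order determined by the weight map `w`. -/
def wLe {n : ℕ} (w : MVar n → ℝ) (t u : Mon (MVar n)) : Prop := t = u ∨ wdeg w t < wdeg w u


/-- Unbarred level variables with natural-number levels. -/
inductive UV : Type where
  | S (k : ℕ) | F (k : ℕ)
  | Q (j : Fin 4) (k : ℕ) | C (j : Fin 4) (k : ℕ) | B (j : Fin 4) (k : ℕ)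
deriving DecidableEq

/-- Indicator of the index `j`. -/
def uind (j i : Fin 4) : ℕ := if i = j then 1 else 0

/-- Everything strictly below level `k` vanishes. -/
def Zb (a : UV → ℕ) (k : ℕ) : Prop :=
  (∀ i < k, a (.S i) = 0 ∧ a (.F i) = 0 ∧ ∀ j, a (.C j i) = 0 ∧ a (.B j i) = 0) ∧
    ∀ i ≤ k, ∀ j, a (.Q j i) = 0

/-- The machine is at rest in a start or final state at level `k`. -/
def Term (a : UV → ℕ) (k : ℕ) (j : Fin 4) (V : ℕ) : Prop :=
  (∀ i, a (.C i k) = uind j i) ∧ Zb a k ∧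
    ((a (.S k) = 0 ∧ a (.F k) = 1 ∧ V = a (.B j k)) ∨
      (a (.S k) = 1 ∧ a (.F k) = 0 ∧ V = a (.B j k) + en k))

/-- Consistency of a subroutine call. -/
def Cond (e : ℕ) (j : Fin 4) (v : ℕ) (b0 b1 b2 b3 N V : ℕ) : Prop :=
  (j = 0 ∧ v + b3 = e ∧ b1 = 0 ∧ b2 = 0 ∧ V = N + e * v) ∨
  (j = 1 ∧ v + b2 = e ∧ b0 + b3 + 1 = e ∧ V + (b3 * e + b2) = N + e * e) ∨
  (j = 2 ∧ v + b1 = e ∧ b0 + b3 + 1 = e ∧ V + (b3 * e + v) = N + e * e) ∨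
  (j = 3 ∧ v + b0 = e ∧ b1 = 0 ∧ b2 = 0 ∧ V + v * e = N + e * e)

/-- The invariant: the machine of level `k` called with index `j` has value `V`. -/
def Val (a : UV → ℕ) : ℕ → Fin 4 → ℕ → Prop
  | 0, j, V => Term a 0 j V
  | k+1, j, V => Term a (k+1) j V ∨
      ((∀ i, a (.C i (k+1)) = uind j i) ∧ a (.S (k+1)) = 0 ∧ a (.F (k+1)) = 0 ∧
        ∃ j' v, (∀ i, a (.Q i (k+1)) = uind j' i) ∧ Val a k j' v ∧
          Cond (en k) j' v (a (.B 0 k)) (a (.B 1 k)) (a (.B 2 k)) (a (.B 3 k))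
            (a (.B j (k+1))) V)

theorem Val_C {a : UV → ℕ} {k : ℕ} {j : Fin 4} {V : ℕ} (h : Val a k j V) :
    ∀ i, a (.C i k) = uind j i := by
  cases k with
  | zero => exact h.1
  | succ k => rcases h with h | h <;> exact h.1

theorem Val_SF {a : UV → ℕ} {k : ℕ} {j : Fin 4} {V : ℕ} (h : 1 ≤ a (.S k) + a (.F k)) :
    Val a k j V ↔ Term a k j V := by
  cases k with
  | zero => rfl
  | succ k =>
    refine ⟨?_, Or.inl⟩
    rintro (h' | ⟨_, h1, h2, _⟩)
    · exact h'
    · omega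

theorem not_Zb {a : UV → ℕ} {k m : ℕ} (h : 1 ≤ a (.S k) + a (.F k)) (hk : k < m) : ¬ Zb a m := by
  intro hz
  have := hz.1 k hk
  omega

theorem not_Term {a : UV → ℕ} {k m : ℕ} {j : Fin 4} {V : ℕ}
    (h : 1 ≤ a (.S k) + a (.F k)) (hk : k < m) : ¬ Term a m j V :=
  fun ht => not_Zb h hk ht.2.1

theorem Val_succ {a : UV → ℕ} {k : ℕ} {j : Fin 4} {V : ℕ} (h : 1 ≤ a (.S k) + a (.F k)) :
    Val a (k+1) j V ↔
      ((∀ i, a (.C i (k+1)) = uind j i) ∧ a (.S (k+1)) = 0 ∧ a (.F (k+1)) = 0 ∧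
        ∃ j' v, (∀ i, a (.Q i (k+1)) = uind j' i) ∧ Term a k j' v ∧
          Cond (en k) j' v (a (.B 0 k)) (a (.B 1 k)) (a (.B 2 k)) (a (.B 3 k))
            (a (.B j (k+1))) V) := by
  simp only [Val, Val_SF h, not_Term h (Nat.lt_succ_self k), false_or]

/-- Two exponent functions which the machine of level `m` cannot distinguish. -/
def Sim (a a' : UV → ℕ) (m : ℕ) : Prop :=
  (∀ j V, Val a m j V ↔ Val a' m j V) ∧
  (∀ j V, Val a m j V → ∀ i ≠ j, a (.B i m) = a' (.B i m)) ∧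
  (∃ i ≤ m, 1 ≤ a (.S i) + a (.F i)) ∧ (∃ i ≤ m, 1 ≤ a' (.S i) + a' (.F i)) ∧
  ∀ k > m, a (.S k) = a' (.S k) ∧ a (.F k) = a' (.F k) ∧
    ∀ j, a (.Q j k) = a' (.Q j k) ∧ a (.C j k) = a' (.C j k) ∧ a (.B j k) = a' (.B j k)

theorem Zb_mono {a : UV → ℕ} {k m : ℕ} (h : Zb a m) (hk : k ≤ m) : Zb a k :=
  ⟨fun i hi => h.1 i (by omega), fun i hi => h.2 i (by omega)⟩

theorem Sim.symm {a a' : UV → ℕ} {m : ℕ} (h : Sim a a' m) : Sim a' a m := by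
  obtain ⟨h1, h2, h3, h4, h5⟩ := h
  refine ⟨fun j V => (h1 j V).symm, fun j V hv i hi => (h2 j V ((h1 j V).2 hv) i hi).symm, h4, h3,
    fun k hk => ?_⟩
  obtain ⟨g1, g2, g3⟩ := h5 k hk
  exact ⟨g1.symm, g2.symm, fun j => ⟨(g3 j).1.symm, (g3 j).2.1.symm, (g3 j).2.2.symm⟩⟩

theorem Cond_congr {e : ℕ} {j : Fin 4} {v N V : ℕ} {b b' : Fin 4 → ℕ}
    (h : ∀ i ≠ j, b i = b' i) (hc : Cond e j v (b 0) (b 1) (b 2) (b 3) N V) :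
    Cond e j v (b' 0) (b' 1) (b' 2) (b' 3) N V := by
  unfold Cond at *
  rcases hc with ⟨rfl, hc⟩ | ⟨rfl, hc⟩ | ⟨rfl, hc⟩ | ⟨rfl, hc⟩
  · rw [h 1 (by decide), h 2 (by decide), h 3 (by decide)] at hc; tauto
  · rw [h 0 (by decide), h 2 (by decide), h 3 (by decide)] at hc; tauto
  · rw [h 0 (by decide), h 1 (by decide), h 3 (by decide)] at hc; tauto
  · rw [h 0 (by decide), h 1 (by decide), h 2 (by decide)] at hc; tauto

theorem Sim.step_aux {a a' : UV → ℕ} {m : ℕ} (h : Sim a a' m) (j : Fin 4) (V : ℕ)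
    (hv : Val a (m+1) j V) : Val a' (m+1) j V := by
  obtain ⟨h1, h2, h3, h4, h5⟩ := h
  obtain ⟨g1, g2, g3⟩ := h5 (m+1) (Nat.lt_succ_self m)
  rcases hv with hv | ⟨c1, c2, c3, j', v, c4, c5, c6⟩
  · obtain ⟨i, hi, h3⟩ := h3
    exact absurd hv.2.1 (not_Zb h3 (by omega))
  · refine Or.inr ⟨fun i => (g3 i).2.1 ▸ c1 i, g1 ▸ c2, g2 ▸ c3, j', v, fun i => (g3 i).1 ▸ c4 i,
      (h1 _ _).1 c5, ?_⟩
    rw [← (g3 j).2.2]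
    exact Cond_congr (b := fun i => a (.B i m)) (b' := fun i => a' (.B i m)) (h2 _ _ c5) c6

theorem Sim.step {a a' : UV → ℕ} {m : ℕ} (h : Sim a a' m) : Sim a a' (m+1) := by
  refine ⟨fun j V => ⟨h.step_aux j V, h.symm.step_aux j V⟩, ?_, ?_, ?_, ?_⟩
  · intro j V _ i _
    exact ((h.2.2.2.2 (m+1) (Nat.lt_succ_self m)).2.2 i).2.2
  · obtain ⟨i, hi, h3⟩ := h.2.2.1
    exact ⟨i, by omega, h3⟩
  · obtain ⟨i, hi, h3⟩ := h.2.2.2.1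
    exact ⟨i, by omega, h3⟩
  · exact fun k hk => h.2.2.2.2 k (by omega)

theorem Sim.up {a a' : UV → ℕ} {m n : ℕ} (h : Sim a a' m) (hn : m ≤ n) : Sim a a' n := by
  induction hn with
  | refl => exact h
  | step _ ih => exact ih.step

/-- Unit exponent function. -/
def us (x : UV) : UV → ℕ := fun y => if y = x then 1 else 0

theorem Zb_congr {a a' : UV → ℕ} {k : ℕ}
    (h1 : ∀ i < k, a (.S i) = a' (.S i) ∧ a (.F i) = a' (.F i) ∧
      ∀ j, a (.C j i) = a' (.C j i) ∧ a (.B j i) = a' (.B j i))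
    (h2 : ∀ i ≤ k, ∀ j, a (.Q j i) = a' (.Q j i)) : Zb a k ↔ Zb a' k := by
  unfold Zb
  constructor
  · rintro ⟨g1, g2⟩
    refine ⟨fun i hi => ?_, fun i hi j => ?_⟩
    · simpa [h1 i hi] using g1 i hi
    · simpa [h2 i hi] using g2 i hi j
  · rintro ⟨g1, g2⟩
    refine ⟨fun i hi => ?_, fun i hi j => ?_⟩
    · simpa [h1 i hi] using g1 i hi
    · simpa [h2 i hi] using g2 i hi j

theorem Zb_succ {a : UV → ℕ} {k : ℕ} : Zb a (k+1) ↔ Zb a k ∧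
    (a (.S k) = 0 ∧ a (.F k) = 0 ∧ ∀ j, a (.C j k) = 0 ∧ a (.B j k) = 0) ∧
    ∀ j, a (.Q j (k+1)) = 0 := by
  unfold Zb
  constructor
  · rintro ⟨h1, h2⟩
    exact ⟨⟨fun i hi => h1 i (by omega), fun i hi => h2 i (by omega)⟩, h1 k (by omega),
      h2 (k+1) le_rfl⟩
  · rintro ⟨⟨h1, h2⟩, h3, h4⟩
    refine ⟨fun i hi => ?_, fun i hi => ?_⟩
    · rcases Nat.lt_succ_iff_lt_or_eq.1 hi with h | rfl
      · exact h1 i h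
      · exact h3
    · rcases Nat.le_succ_iff.1 hi with h | rfl
      · exact h2 i h
      · exact h4

theorem sim_P0 (r : UV → ℕ) (j : Fin 4) :
    Sim (r + (2 • us (.B j 0) + us (.C j 0) + us (.F 0))) (r + (us (.C j 0) + us (.S 0))) 0 := by
  refine ⟨fun i V => ?_, fun i V h => ?_, ?_, ?_, fun k hk => ?_⟩
  · have hz : Zb (r + (2 • us (.B j 0) + us (.C j 0) + us (.F 0))) 0 ↔
        Zb (r + (us (.C j 0) + us (.S 0))) 0 := by
      apply Zb_congr <;> simp [us]
    have : en 0 = 2 := rfl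
    simp only [Val, Term, hz, this]
    by_cases hij : i = j
    · subst hij
      simp [us]
    · refine iff_of_false ?_ ?_ <;>
      · rintro ⟨h, -⟩
        have := h j
        simp [us, uind, Ne.symm hij] at this
  · have h1 := Val_C h j
    intro i' hi'
    by_cases hij : j = i
    · subst hij
      simp [us, hi']
    · simp [us, uind, hij] at h1
  · exact ⟨0, le_rfl, by simp [us]; omega⟩
  · exact ⟨0, le_rfl, by simp [us]; omega⟩
  · have : k ≠ 0 := by omega
    simp [us, this]

theorem Zb_add {r t u : UV → ℕ} {k : ℕ}
    (h1 : ∀ i < k, t (.S i) = u (.S i) ∧ t (.F i) = u (.F i) ∧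
      ∀ j, t (.C j i) = u (.C j i) ∧ t (.B j i) = u (.B j i))
    (h2 : ∀ i ≤ k, ∀ j, t (.Q j i) = u (.Q j i)) : Zb (r + t) k ↔ Zb (r + u) k := by
  apply Zb_congr
  · intro i hi
    simpa using h1 i hi
  · intro i hi
    simpa using h2 i hi

theorem sim_of (r t u : UV → ℕ) (k : ℕ)
    (h : ∀ j V, Val (r + t) (k+1) j V ↔ Val (r + u) (k+1) j V)
    (hB : ∀ j V, Val (r + t) (k+1) j V → ∀ i ≠ j, t (.B i (k+1)) = u (.B i (k+1)))
    (h1 : 1 ≤ t (.S k) + t (.F k) + t (.S (k+1)) + t (.F (k+1)))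
    (h2 : 1 ≤ u (.S k) + u (.F k) + u (.S (k+1)) + u (.F (k+1)))
    (h3 : ∀ i > k+1, t (.S i) = u (.S i) ∧ t (.F i) = u (.F i) ∧
      ∀ j, t (.Q j i) = u (.Q j i) ∧ t (.C j i) = u (.C j i) ∧ t (.B j i) = u (.B j i)) :
    Sim (r + t) (r + u) (k+1) := by
  refine ⟨h, fun j V hv i hi => ?_, ?_, ?_, fun i hi => ?_⟩
  · simp [hB j V hv i hi]
  · rcases (by omega : 1 ≤ t (.S k) + t (.F k) ∨ 1 ≤ t (.S (k+1)) + t (.F (k+1))) with h | h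
    · exact ⟨k, by omega, by simp only [Pi.add_apply]; omega⟩
    · exact ⟨k+1, by omega, by simp only [Pi.add_apply]; omega⟩
  · rcases (by omega : 1 ≤ u (.S k) + u (.F k) ∨ 1 ≤ u (.S (k+1)) + u (.F (k+1))) with h | h
    · exact ⟨k, by omega, by simp only [Pi.add_apply]; omega⟩
    · exact ⟨k+1, by omega, by simp only [Pi.add_apply]; omega⟩
  · simpa using h3 i hi

theorem R2_arith (b0 b1 b2 b3 e N V : ℕ) :
    b1 + e + b2 = e ∧ b0 + b3 + 1 = e ∧ V + (b3 * e + b2) = N + e * e ↔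
      b0 + 1 + b3 = e ∧ b1 = 0 ∧ b2 = 0 ∧ V = N + e * (b0 + 1) := by
  constructor
  · rintro ⟨h1, h2, h3⟩
    have hb1 : b1 = 0 := by omega
    have hb2 : b2 = 0 := by omega
    subst hb1 hb2 h2
    refine ⟨by omega, rfl, rfl, by linarith⟩
  · rintro ⟨h1, rfl, rfl, rfl⟩
    subst h1
    refine ⟨by omega, by omega, by ring⟩

theorem sim_R1 (r : UV → ℕ) (k : ℕ) :
    Sim (r + (us (.Q 0 (k+1)) + us (.C 0 k) + us (.S k)))
      (r + (us (.S (k+1)))) (k+1) := by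
  apply sim_of
  · intro j V
    rw [Val_succ (by simp [us]; omega), Val_SF (by simp [us]; omega)]
    have hz : Zb (r + (us (.Q 0 (k+1)) + us (.C 0 k) + us (.S k))) k ↔
        Zb (r + (us (.S (k+1)))) k := by
      apply Zb_add <;> intro i hi
      · have h1 : i ≠ k := by omega
        have h2 : i ≠ k + 1 := by omega
        simp [us, h1, h2]
      · have h2 : i ≠ k + 1 := by omega
        simp [us, h2]
    simp only [Term, Cond, hz, Zb_succ]
    have : en (k+1) = en k * en k := by unfold en; ring
    generalize Zb (r + (us (.S (k+1)))) k = Z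
    simp [us, uind, Fin.forall_fin_succ, Fin.exists_fin_succ, this]
    grind
  · simp [us]
  · simp [us]
  · simp [us]
  · intro i hi
    have h1 : i ≠ k := by omega
    have h2 : i ≠ k + 1 := by omega
    simp [us, h1, h2]

theorem sim_R2 (r : UV → ℕ) (k : ℕ) :
    Sim (r + (us (.Q 1 (k+1)) + us (.C 1 k) + us (.S k)))
      (r + (us (.Q 0 (k+1)) + us (.B 0 k) + us (.C 0 k) + us (.F k))) (k+1) := by
  apply sim_of
  · intro j V
    rw [Val_succ (by simp [us]; omega), Val_succ (by simp [us]; omega)]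
    have hz : Zb (r + (us (.Q 1 (k+1)) + us (.C 1 k) + us (.S k))) k ↔
        Zb (r + (us (.Q 0 (k+1)) + us (.B 0 k) + us (.C 0 k) + us (.F k))) k := by
      apply Zb_add <;> intro i hi
      · have h1 : i ≠ k := by omega
        have h2 : i ≠ k + 1 := by omega
        simp [us, h1, h2]
      · have h2 : i ≠ k + 1 := by omega
        simp [us, h2]
    simp only [Term, Cond, hz]
    have : en (k+1) = en k * en k := by unfold en; ring
    generalize Zb (r + (us (.Q 0 (k+1)) + us (.B 0 k) + us (.C 0 k) + us (.F k))) k = Z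
    simp [us, uind, Fin.forall_fin_succ, Fin.exists_fin_succ, this]
    intros; exact R2_arith _ _ _ _ _ _ _
  · simp [us]
  · simp [us]
  · simp [us]
  · intro i hi
    have h1 : i ≠ k := by omega
    have h2 : i ≠ k + 1 := by omega
    simp [us, h1, h2]

theorem sim_R3 (r : UV → ℕ) (k : ℕ) :
    Sim (r + (us (.Q 2 (k+1)) + us (.C 2 k) + us (.F k)))
      (r + (us (.Q 1 (k+1)) + us (.C 1 k) + us (.F k))) (k+1) := by
  apply sim_of
  · intro j V
    rw [Val_succ (by simp [us]; omega), Val_succ (by simp [us]; omega)]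
    have hz : Zb (r + (us (.Q 2 (k+1)) + us (.C 2 k) + us (.F k))) k ↔
        Zb (r + (us (.Q 1 (k+1)) + us (.C 1 k) + us (.F k))) k := by
      apply Zb_add <;> intro i hi
      · have h1 : i ≠ k := by omega
        have h2 : i ≠ k + 1 := by omega
        simp [us, h1, h2]
      · have h2 : i ≠ k + 1 := by omega
        simp [us, h2]
    simp only [Term, Cond, hz]
    have : en (k+1) = en k * en k := by unfold en; ring
    generalize Zb (r + (us (.Q 1 (k+1)) + us (.C 1 k) + us (.F k))) k = Z
    simp [us, uind, Fin.forall_fin_succ, Fin.exists_fin_succ, this]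
    grind
  · simp [us]
  · simp [us]
  · simp [us]
  · intro i hi
    have h1 : i ≠ k := by omega
    have h2 : i ≠ k + 1 := by omega
    simp [us, h1, h2]

theorem sim_R4 (r : UV → ℕ) (k : ℕ) :
    Sim (r + (us (.Q 2 (k+1)) + us (.B 0 k) + us (.C 2 k) + us (.S k)))
      (r + (us (.Q 1 (k+1)) + us (.B 3 k) + us (.C 1 k) + us (.S k))) (k+1) := by
  apply sim_of
  · intro j V
    rw [Val_succ (by simp [us]; omega), Val_succ (by simp [us]; omega)]
    have hz : Zb (r + (us (.Q 2 (k+1)) + us (.B 0 k) + us (.C 2 k) + us (.S k))) k ↔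
        Zb (r + (us (.Q 1 (k+1)) + us (.B 3 k) + us (.C 1 k) + us (.S k))) k := by
      apply Zb_add <;> intro i hi
      · have h1 : i ≠ k := by omega
        have h2 : i ≠ k + 1 := by omega
        simp [us, h1, h2]
      · have h2 : i ≠ k + 1 := by omega
        simp [us, h2]
    simp only [Term, Cond, hz]
    have : en (k+1) = en k * en k := by unfold en; ring
    generalize Zb (r + (us (.Q 1 (k+1)) + us (.B 3 k) + us (.C 1 k) + us (.S k))) k = Z
    simp [us, uind, Fin.forall_fin_succ, Fin.exists_fin_succ, this]
    grind
  · simp [us]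
  · simp [us]
  · simp [us]
  · intro i hi
    have h1 : i ≠ k := by omega
    have h2 : i ≠ k + 1 := by omega
    simp [us, h1, h2]

theorem sim_R5 (r : UV → ℕ) (k : ℕ) :
    Sim (r + (us (.Q 3 (k+1)) + us (.B 3 k) + us (.C 3 k) + us (.F k)))
      (r + (us (.Q 2 (k+1)) + us (.C 2 k) + us (.S k))) (k+1) := by
  apply sim_of
  · intro j V
    rw [Val_succ (by simp [us]; omega), Val_succ (by simp [us]; omega)]
    have hz : Zb (r + (us (.Q 3 (k+1)) + us (.B 3 k) + us (.C 3 k) + us (.F k))) k ↔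
        Zb (r + (us (.Q 2 (k+1)) + us (.C 2 k) + us (.S k))) k := by
      apply Zb_add <;> intro i hi
      · have h1 : i ≠ k := by omega
        have h2 : i ≠ k + 1 := by omega
        simp [us, h1, h2]
      · have h2 : i ≠ k + 1 := by omega
        simp [us, h2]
    simp only [Term, Cond, hz]
    have : en (k+1) = en k * en k := by unfold en; ring
    generalize Zb (r + (us (.Q 2 (k+1)) + us (.C 2 k) + us (.S k))) k = Z
    simp [us, uind, Fin.forall_fin_succ, Fin.exists_fin_succ, this]
    grind
  · simp [us]
  · simp [us]
  · simp [us]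
  · intro i hi
    have h1 : i ≠ k := by omega
    have h2 : i ≠ k + 1 := by omega
    simp [us, h1, h2]

theorem sim_R6 (r : UV → ℕ) (k : ℕ) :
    Sim (r + (us (.Q 3 (k+1)) + us (.C 3 k) + us (.S k)))
      (r + (us (.F (k+1)))) (k+1) := by
  apply sim_of
  · intro j V
    rw [Val_succ (by simp [us]; omega), Val_SF (by simp [us]; omega)]
    have hz : Zb (r + (us (.Q 3 (k+1)) + us (.C 3 k) + us (.S k))) k ↔
        Zb (r + (us (.F (k+1)))) k := by
      apply Zb_add <;> intro i hi
      · have h1 : i ≠ k := by omega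
        have h2 : i ≠ k + 1 := by omega
        simp [us, h1, h2]
      · have h2 : i ≠ k + 1 := by omega
        simp [us, h2]
    simp only [Term, Cond, hz, Zb_succ]
    have : en (k+1) = en k * en k := by unfold en; ring
    generalize Zb (r + (us (.F (k+1)))) k = Z
    simp [us, uind, Fin.forall_fin_succ, Fin.exists_fin_succ, this]
    grind
  · simp [us]
  · simp [us]
  · simp [us]
  · intro i hi
    have h1 : i ≠ k := by omega
    have h2 : i ≠ k + 1 := by omega
    simp [us, h1, h2]

theorem sim_R7 (r : UV → ℕ) (k : ℕ) (l : Fin 4) :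
    Sim (r + (us (.Q 1 (k+1)) + us (.B 2 k) + us (.B l (k+1)) + us (.C l (k+1)) + us (.F k)))
      (r + (us (.Q 1 (k+1)) + us (.B 1 k) + us (.C l (k+1)) + us (.F k))) (k+1) := by
  apply sim_of
  · intro j V
    by_cases hl : l = j
    · subst hl
      rw [Val_succ (by simp [us]; omega), Val_succ (by simp [us]; omega)]
      have hz : Zb (r + (us (.Q 1 (k+1)) + us (.B 2 k) + us (.B l (k+1)) + us (.C l (k+1)) + us (.F k))) k ↔
          Zb (r + (us (.Q 1 (k+1)) + us (.B 1 k) + us (.C l (k+1)) + us (.F k))) k := by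
        apply Zb_add <;> intro i hi
        · have h1 : i ≠ k := by omega
          have h2 : i ≠ k + 1 := by omega
          simp [us, h1, h2]
        · have h2 : i ≠ k + 1 := by omega
          simp [us, h2]
      simp only [Term, Cond, hz]
      generalize Zb (r + (us (.Q 1 (k+1)) + us (.B 1 k) + us (.C l (k+1)) + us (.F k))) k = Z
      simp [us, uind, Fin.forall_fin_succ, Fin.exists_fin_succ]
      grind
    · refine iff_of_false ?_ ?_ <;>
      · intro h
        have := Val_C h l
        simp [us, uind, hl] at this
  · intro j V h i hi
    have := Val_C h l
    by_cases hl : l = j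
    · subst hl
      simp [us, hi]
    · simp [us, uind, hl] at this
  · simp [us]
  · simp [us]
  · intro i hi
    have h1 : i ≠ k := by omega
    have h2 : i ≠ k + 1 := by omega
    simp [us, h1, h2]

/-- Exponents of the unbarred level variables of a monomial. -/
def uget {n : ℕ} (τ : Mon (MVar n)) : UV → ℕ
  | .S k => if h : k < n + 1 then τ (vS false ⟨k, h⟩) else 0
  | .F k => if h : k < n + 1 then τ (vF false ⟨k, h⟩) else 0
  | .Q j k => if h : k < n + 1 then τ (vQ false j ⟨k, h⟩) else 0
  | .C j k => if h : k < n + 1 then τ (vC false j ⟨k, h⟩) else 0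
  | .B j k => if h : k < n + 1 then τ (vB false j ⟨k, h⟩) else 0

/-- Unbarred level variables. -/
def isLev {n : ℕ} : MVar n → Bool
  | .vS b _ => !b
  | .vF b _ => !b
  | .vQ b _ _ => !b
  | .vC b _ _ => !b
  | .vB b _ _ => !b
  | _ => false

/-- Barred level variables. -/
def isBar {n : ℕ} : MVar n → Bool
  | .vS b _ => b
  | .vF b _ => b
  | .vQ b _ _ => b
  | .vC b _ _ => b
  | .vB b _ _ => b
  | _ => false

theorem isLev_of_isBar {n : ℕ} {v : MVar n} (h : isBar v = true) : isLev v = false := by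
  cases v <;> simp_all [isBar, isLev]

/-- Exponent vector of a single variable. -/
noncomputable abbrev ms {n : ℕ} (x : MVar n) : Mon (MVar n) := Finsupp.single x 1

theorem uget_add {n : ℕ} (a b : Mon (MVar n)) : uget (a + b) = uget a + uget b := by
  funext x
  cases x <;> simp only [uget, Pi.add_apply] <;> split_ifs <;> simp

theorem uget_nsmul {n : ℕ} (a : Mon (MVar n)) : uget (2 • a) = 2 • uget a := by
  rw [two_nsmul, two_nsmul, uget_add]

theorem uget_S {n : ℕ} (i : Fin (n+1)) : uget (ms (vS false i)) = us (.S i) := by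
  funext x
  cases x <;> simp only [uget, us, ms, Finsupp.single_apply] <;> split_ifs <;>
    simp_all [Fin.ext_iff] <;> omega

theorem uget_F {n : ℕ} (i : Fin (n+1)) : uget (ms (vF false i)) = us (.F i) := by
  funext x
  cases x <;> simp only [uget, us, ms, Finsupp.single_apply] <;> split_ifs <;>
    simp_all [Fin.ext_iff] <;> omega

theorem uget_Q {n : ℕ} (j : Fin 4) (i : Fin (n+1)) : uget (ms (vQ false j i)) = us (.Q j i) := by
  funext x
  cases x <;> simp only [uget, us, ms, Finsupp.single_apply] <;> split_ifs <;>
    simp_all [-Fin.ext_iff, Fin.eq_mk_iff_val_eq] <;> omega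

theorem uget_C {n : ℕ} (j : Fin 4) (i : Fin (n+1)) : uget (ms (vC false j i)) = us (.C j i) := by
  funext x
  cases x <;> simp only [uget, us, ms, Finsupp.single_apply] <;> split_ifs <;>
    simp_all [-Fin.ext_iff, Fin.eq_mk_iff_val_eq] <;> omega

theorem uget_B {n : ℕ} (j : Fin 4) (i : Fin (n+1)) : uget (ms (vB false j i)) = us (.B j i) := by
  funext x
  cases x <;> simp only [uget, us, ms, Finsupp.single_apply] <;> split_ifs <;>
    simp_all [-Fin.ext_iff, Fin.eq_mk_iff_val_eq] <;> omega

theorem uget_other {n : ℕ} (x : MVar n) (hx : isLev x = false) : uget (ms x) = 0 := by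
  funext y
  cases y <;> simp only [uget, ms, Finsupp.single_apply] <;> split_ifs <;>
    simp_all [isLev]
  all_goals (subst x; simp [isLev] at hx)

/-- The invariant set of monomials containing `ℓ c̄^{m1} c^{m2}`. -/
def WW (n m1 m2 : ℕ) (τ : Mon (MVar n)) : Prop :=
  (∀ v, isBar v = true → τ v = 0) ∧ τ vs = 0 ∧ τ vc + τ vb = m2 ∧ τ vcb + τ vbb = m1 ∧
  (∀ i ≠ 3, uget τ (.B i n) = 0) ∧
  ((τ vl = 1 ∧ Zb (uget τ) n ∧ uget τ (.S n) = 0 ∧ uget τ (.F n) = 0 ∧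
      (∀ i, uget τ (.C i n) = 0) ∧ uget τ (.B 3 n) = τ vb + τ vbb) ∨
    (τ vl = 0 ∧ Val (uget τ) n 3 (τ vb + τ vbb)))

theorem WW_sim {n m1 m2 : ℕ} {τ τ' : Mon (MVar n)} (hs : Sim (uget τ) (uget τ') n)
    (ho : ∀ v, isLev v = false → τ v = τ' v) (h : WW n m1 m2 τ) : WW n m1 m2 τ' := by
  obtain ⟨h1, h2, h3, h4, h5, h6⟩ := h
  rw [WW, ← ho vs rfl, ← ho vc rfl, ← ho vb rfl, ← ho vcb rfl, ← ho vbb rfl, ← ho vl rfl]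
  refine ⟨fun v hv => (ho v (isLev_of_isBar hv)).symm.trans (h1 v hv), h2, h3, h4, ?_, ?_⟩
  all_goals rcases h6 with ⟨g1, g2, g3, g4, _⟩ | ⟨g1, g2⟩
  · obtain ⟨i, hi, h⟩ := hs.2.2.1
    rcases Nat.lt_or_eq_of_le hi with hi | rfl
    · exact absurd g2 (not_Zb h hi)
    · omega
  · intro i hi
    rw [← hs.2.1 3 _ g2 i hi]
    exact h5 i hi
  · obtain ⟨i, hi, h⟩ := hs.2.2.1
    rcases Nat.lt_or_eq_of_le hi with hi | rfl
    · exact absurd g2 (not_Zb h hi)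
    · omega
  · exact Or.inr ⟨g1, (hs.1 _ _).1 g2⟩

theorem WW_bar {n m1 m2 : ℕ} {τ : Mon (MVar n)} (x : MVar n) (hx : isBar x = true)
    (h : 1 ≤ τ x) : ¬ WW n m1 m2 τ := by
  intro hw
  have := hw.1 x hx
  omega

theorem WW_S {n m1 m2 : ℕ} (hm : m1 + m2 < en n) {τ : Mon (MVar n)}
    (h : 1 ≤ uget τ (.S n)) : ¬ WW n m1 m2 τ := by
  rintro ⟨h1, h2, h3, h4, h5, h6⟩
  rcases h6 with ⟨g1, g2, g3, g4, _⟩ | ⟨g1, g2⟩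
  · omega
  · rw [Val_SF (by omega)] at g2
    rcases g2.2.2 with g | g <;> omega

theorem ms_lev {n : ℕ} {x v : MVar n} (hx : isLev x = true) (hv : isLev v = false) :
    (ms x) v = 0 := by
  apply Finsupp.single_eq_of_ne
  rintro rfl
  simp_all

/-- `p` is a binomial both of whose translates lie simultaneously in `W`. -/
def Bal {n : ℕ} (W : Mon (MVar n) → Prop) (p : MPoly n) : Prop :=
  ∃ t u, p = monomial t 1 + monomial u 1 ∧ ∀ r, W (r + t) ↔ W (r + u)

theorem Bal_sim {n m1 m2 : ℕ} {p : MPoly n} (t u : Mon (MVar n)) (m : ℕ) (hm : m ≤ n)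
    (hp : p = monomial t 1 + monomial u 1)
    (hs : ∀ r, Sim (r + uget t) (r + uget u) m)
    (ht : ∀ v, isLev v = false → t v = 0) (hu : ∀ v, isLev v = false → u v = 0) :
    Bal (WW n m1 m2) p := by
  refine ⟨t, u, hp, fun r => ?_⟩
  have h1 : Sim (uget (r + t)) (uget (r + u)) n := by
    rw [uget_add, uget_add]
    exact (hs _).up hm
  refine ⟨WW_sim h1 ?_, WW_sim h1.symm ?_⟩ <;>
  · intro v hv
    simp [ht v hv, hu v hv]

theorem Bal_bar {n m1 m2 : ℕ} {p : MPoly n} (t u : Mon (MVar n))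
    (hp : p = monomial t 1 + monomial u 1) (x y : MVar n) (hx : isBar x = true)
    (hy : isBar y = true) (ht : 1 ≤ t x) (hu : 1 ≤ u y) :
    Bal (WW n m1 m2) p := by
  refine ⟨t, u, hp, fun r => iff_of_false (WW_bar x hx ?_) (WW_bar y hy ?_)⟩
  · simp; omega
  · simp; omega

theorem X_ms {n : ℕ} (x : MVar n) : (X x : MPoly n) = monomial (ms x) 1 := rfl

theorem Bal_P0 {n m1 m2 : ℕ} (p : MPoly n) (hp : p ∈ P0 n false) : Bal (WW n m1 m2) p := by
  obtain ⟨j, rfl⟩ := hp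
  refine Bal_sim (2 • ms (vB false j 0) + ms (vC false j 0) + ms (vF false 0))
    (ms (vC false j 0) + ms (vS false 0)) 0 (by omega) ?_ (fun r => ?_) ?_ ?_
  · simp [X_ms, monomial_mul, monomial_pow]
  · simp only [uget_add, uget_nsmul, uget_S, uget_F, uget_C, uget_B]
    exact sim_P0 r j
  · intro v hv
    simp only [Finsupp.add_apply, Finsupp.smul_apply]
    rw [ms_lev rfl hv, ms_lev rfl hv, ms_lev rfl hv]
    rfl
  · intro v hv
    simp [ms_lev _ hv, isLev]

theorem Bal_P0bar {n m1 m2 : ℕ} (p : MPoly n) (hp : p ∈ P0 n true) : Bal (WW n m1 m2) p := by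
  obtain ⟨j, rfl⟩ := hp
  refine Bal_bar (2 • ms (vB true j 0) + ms (vC true j 0) + ms (vF true 0))
    (ms (vC true j 0) + ms (vS true 0)) ?_ (vC true j 0) (vC true j 0) rfl rfl ?_ ?_
  · simp [X_ms, monomial_mul, monomial_pow]
  · simp
  · simp

theorem Bal_Pm {n m1 m2 : ℕ} (i : Fin n) (p : MPoly n) (hp : p ∈ Pm n false i) :
    Bal (WW n m1 m2) p := by
  rcases hp with (rfl | rfl | rfl | rfl | rfl | rfl) | ⟨l, rfl⟩
  · refine Bal_sim (ms (vQ false 0 i.succ) + ms (vC false 0 i.castSucc) + ms (vS false i.castSucc))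
      (ms (vS false i.succ)) (i + 1) (by omega) ?_ (fun r => ?_) ?_ ?_
    · simp [X_ms, monomial_mul]
    · simp only [uget_add, uget_S, uget_F, uget_Q, uget_C, uget_B]
      exact sim_R1 r i
    · intro v hv
      simp [ms_lev _ hv, isLev]
    · intro v hv
      simp [ms_lev _ hv, isLev]
  · refine Bal_sim (ms (vQ false 1 i.succ) + ms (vC false 1 i.castSucc) + ms (vS false i.castSucc))
      (ms (vQ false 0 i.succ) + ms (vB false 0 i.castSucc) + ms (vC false 0 i.castSucc) + ms (vF false i.castSucc)) (i + 1) (by omega) ?_ (fun r => ?_) ?_ ?_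
    · simp [X_ms, monomial_mul]
    · simp only [uget_add, uget_S, uget_F, uget_Q, uget_C, uget_B]
      exact sim_R2 r i
    · intro v hv
      simp [ms_lev _ hv, isLev]
    · intro v hv
      simp [ms_lev _ hv, isLev]
  · refine Bal_sim (ms (vQ false 2 i.succ) + ms (vC false 2 i.castSucc) + ms (vF false i.castSucc))
      (ms (vQ false 1 i.succ) + ms (vC false 1 i.castSucc) + ms (vF false i.castSucc)) (i + 1) (by omega) ?_ (fun r => ?_) ?_ ?_
    · simp [X_ms, monomial_mul]
    · simp only [uget_add, uget_S, uget_F, uget_Q, uget_C, uget_B]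
      exact sim_R3 r i
    · intro v hv
      simp [ms_lev _ hv, isLev]
    · intro v hv
      simp [ms_lev _ hv, isLev]
  · refine Bal_sim (ms (vQ false 2 i.succ) + ms (vB false 0 i.castSucc) + ms (vC false 2 i.castSucc) + ms (vS false i.castSucc))
      (ms (vQ false 1 i.succ) + ms (vB false 3 i.castSucc) + ms (vC false 1 i.castSucc) + ms (vS false i.castSucc)) (i + 1) (by omega) ?_ (fun r => ?_) ?_ ?_
    · simp [X_ms, monomial_mul]
    · simp only [uget_add, uget_S, uget_F, uget_Q, uget_C, uget_B]
      exact sim_R4 r i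
    · intro v hv
      simp [ms_lev _ hv, isLev]
    · intro v hv
      simp [ms_lev _ hv, isLev]
  · refine Bal_sim (ms (vQ false 3 i.succ) + ms (vB false 3 i.castSucc) + ms (vC false 3 i.castSucc) + ms (vF false i.castSucc))
      (ms (vQ false 2 i.succ) + ms (vC false 2 i.castSucc) + ms (vS false i.castSucc)) (i + 1) (by omega) ?_ (fun r => ?_) ?_ ?_
    · simp [X_ms, monomial_mul]
    · simp only [uget_add, uget_S, uget_F, uget_Q, uget_C, uget_B]
      exact sim_R5 r i
    · intro v hv
      simp [ms_lev _ hv, isLev]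
    · intro v hv
      simp [ms_lev _ hv, isLev]
  · refine Bal_sim (ms (vQ false 3 i.succ) + ms (vC false 3 i.castSucc) + ms (vS false i.castSucc))
      (ms (vF false i.succ)) (i + 1) (by omega) ?_ (fun r => ?_) ?_ ?_
    · simp [X_ms, monomial_mul]
    · simp only [uget_add, uget_S, uget_F, uget_Q, uget_C, uget_B]
      exact sim_R6 r i
    · intro v hv
      simp [ms_lev _ hv, isLev]
    · intro v hv
      simp [ms_lev _ hv, isLev]
  · refine Bal_sim (ms (vQ false 1 i.succ) + ms (vB false 2 i.castSucc) + ms (vB false l i.succ) + ms (vC false l i.succ) + ms (vF false i.castSucc))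
      (ms (vQ false 1 i.succ) + ms (vB false 1 i.castSucc) + ms (vC false l i.succ) + ms (vF false i.castSucc)) (i + 1) (by omega) ?_ (fun r => ?_) ?_ ?_
    · simp [X_ms, monomial_mul]
    · simp only [uget_add, uget_S, uget_F, uget_Q, uget_C, uget_B]
      exact sim_R7 r i l
    · intro v hv
      simp [ms_lev _ hv, isLev]
    · intro v hv
      simp [ms_lev _ hv, isLev]

theorem Bal_Pmbar {n m1 m2 : ℕ} (i : Fin n) (p : MPoly n) (hp : p ∈ Pm n true i) :
    Bal (WW n m1 m2) p := by
  rcases hp with (rfl | rfl | rfl | rfl | rfl | rfl) | ⟨l, rfl⟩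
  · refine Bal_bar (ms (vQ true 0 i.succ) + ms (vC true 0 i.castSucc) + ms (vS true i.castSucc))
      (ms (vS true i.succ)) ?_
      (vQ true 0 i.succ) (vS true i.succ) rfl rfl (by simp) (by simp)
    simp [X_ms, monomial_mul]
  · refine Bal_bar (ms (vQ true 1 i.succ) + ms (vC true 1 i.castSucc) + ms (vS true i.castSucc))
      (ms (vQ true 0 i.succ) + ms (vB true 0 i.castSucc) + ms (vC true 0 i.castSucc) + ms (vF true i.castSucc)) ?_
      (vQ true 1 i.succ) (vQ true 0 i.succ) rfl rfl (by simp) (by simp)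
    simp [X_ms, monomial_mul]
  · refine Bal_bar (ms (vQ true 2 i.succ) + ms (vC true 2 i.castSucc) + ms (vF true i.castSucc))
      (ms (vQ true 1 i.succ) + ms (vC true 1 i.castSucc) + ms (vF true i.castSucc)) ?_
      (vQ true 2 i.succ) (vQ true 1 i.succ) rfl rfl (by simp) (by simp)
    simp [X_ms, monomial_mul]
  · refine Bal_bar (ms (vQ true 2 i.succ) + ms (vB true 0 i.castSucc) + ms (vC true 2 i.castSucc) + ms (vS true i.castSucc))
      (ms (vQ true 1 i.succ) + ms (vB true 3 i.castSucc) + ms (vC true 1 i.castSucc) + ms (vS true i.castSucc)) ?_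
      (vQ true 2 i.succ) (vQ true 1 i.succ) rfl rfl (by simp) (by simp)
    simp [X_ms, monomial_mul]
  · refine Bal_bar (ms (vQ true 3 i.succ) + ms (vB true 3 i.castSucc) + ms (vC true 3 i.castSucc) + ms (vF true i.castSucc))
      (ms (vQ true 2 i.succ) + ms (vC true 2 i.castSucc) + ms (vS true i.castSucc)) ?_
      (vQ true 3 i.succ) (vQ true 2 i.succ) rfl rfl (by simp) (by simp)
    simp [X_ms, monomial_mul]
  · refine Bal_bar (ms (vQ true 3 i.succ) + ms (vC true 3 i.castSucc) + ms (vS true i.castSucc))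
      (ms (vF true i.succ)) ?_
      (vQ true 3 i.succ) (vF true i.succ) rfl rfl (by simp) (by simp)
    simp [X_ms, monomial_mul]
  · refine Bal_bar (ms (vQ true 1 i.succ) + ms (vB true 2 i.castSucc) + ms (vB true l i.succ) + ms (vC true l i.succ) + ms (vF true i.castSucc))
      (ms (vQ true 1 i.succ) + ms (vB true 1 i.castSucc) + ms (vC true l i.succ) + ms (vF true i.castSucc)) ?_
      (vQ true 1 i.succ) (vQ true 1 i.succ) rfl rfl (by simp) (by simp)
    simp [X_ms, monomial_mul]

theorem ms_bar {n : ℕ} {x v : MVar n} (hx : isBar x = false) (hv : isBar v = true) :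
    (ms x) v = 0 := by
  apply Finsupp.single_eq_of_ne
  rintro rfl
  simp_all

theorem Zb_add' {r t : UV → ℕ} {k : ℕ}
    (h1 : ∀ i < k, t (.S i) = 0 ∧ t (.F i) = 0 ∧ ∀ j, t (.C j i) = 0 ∧ t (.B j i) = 0)
    (h2 : ∀ i ≤ k, ∀ j, t (.Q j i) = 0) : Zb (r + t) k ↔ Zb r k := by
  apply Zb_congr
  · intro i hi
    simpa using h1 i hi
  · intro i hi
    simpa using h2 i hi

theorem Bal_GG {n m1 m2 : ℕ} (hm : m1 + m2 < en n) (p : MPoly n) (hp : p ∈ GG n) :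
    Bal (WW n m1 m2) p := by
  have hl : ((Fin.last n : Fin (n+1)) : ℕ) = n := rfl
  rcases hp with rfl | rfl | rfl | rfl | rfl | rfl | rfl
  · refine ⟨ms (vB false 3 (Fin.last n)) + ms vl + ms vb, ms vl + ms vc,
      by simp [X_ms, monomial_mul], fun r => ?_⟩
    have e1 : uget (r + (ms (vB false 3 (Fin.last n)) + ms vl + ms vb)) =
        uget r + us (.B 3 n) := by
      simp only [uget_add, uget_B, uget_other vl rfl, uget_other vb rfl, hl, add_zero]
    have e2 : uget (r + (ms vl + ms vc)) = uget r := by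
      simp only [uget_add, uget_other vl rfl, uget_other vc rfl, add_zero]
    have hz : Zb (uget r + us (.B 3 n)) n ↔ Zb (uget r) n := by
      apply Zb_add' <;> intro i hi
      · have h1 : i ≠ n := by omega
        simp [us, h1]
      · simp [us]
    have hb1 : ∀ v : MVar n, isBar v = true →
        (r + (ms (vB false 3 (Fin.last n)) + ms vl + ms vb) : Mon (MVar n)) v = r v := by
      intro v hv
      simp only [Finsupp.add_apply]
      rw [ms_bar rfl hv, ms_bar rfl hv, ms_bar rfl hv]
      rfl
    have hb2 : ∀ v : MVar n, isBar v = true → (r + (ms vl + ms vc) : Mon (MVar n)) v = r v := by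
      intro v hv
      simp only [Finsupp.add_apply]
      rw [ms_bar rfl hv, ms_bar rfl hv]
      rfl
    rw [WW, WW, e1, e2, hz]
    simp +contextual only [hb1, hb2]
    simp [us, Fin.forall_fin_succ]
    grind
  · refine ⟨ms (vB false 3 (Fin.last n)) + ms vl + ms vbb, ms vl + ms vcb,
      by simp [X_ms, monomial_mul], fun r => ?_⟩
    have e1 : uget (r + (ms (vB false 3 (Fin.last n)) + ms vl + ms vbb)) =
        uget r + us (.B 3 n) := by
      simp only [uget_add, uget_B, uget_other vl rfl, uget_other vbb rfl, hl, add_zero]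
    have e2 : uget (r + (ms vl + ms vcb)) = uget r := by
      simp only [uget_add, uget_other vl rfl, uget_other vcb rfl, add_zero]
    have hz : Zb (uget r + us (.B 3 n)) n ↔ Zb (uget r) n := by
      apply Zb_add' <;> intro i hi
      · have h1 : i ≠ n := by omega
        simp [us, h1]
      · simp [us]
    have hb1 : ∀ v : MVar n, isBar v = true →
        (r + (ms (vB false 3 (Fin.last n)) + ms vl + ms vbb) : Mon (MVar n)) v = r v := by
      intro v hv
      simp only [Finsupp.add_apply]
      rw [ms_bar rfl hv, ms_bar rfl hv, ms_bar rfl hv]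
      rfl
    have hb2 : ∀ v : MVar n, isBar v = true → (r + (ms vl + ms vcb) : Mon (MVar n)) v = r v := by
      intro v hv
      simp only [Finsupp.add_apply]
      rw [ms_bar rfl hv, ms_bar rfl hv]
      rfl
    rw [WW, WW, e1, e2, hz]
    simp +contextual only [hb1, hb2]
    simp [us, Fin.forall_fin_succ]
    grind
  · refine ⟨ms (vC false 3 (Fin.last n)) + ms (vF false (Fin.last n)), ms vl,
      by simp [X_ms, monomial_mul], fun r => ?_⟩
    have e1 : uget (r + (ms (vC false 3 (Fin.last n)) + ms (vF false (Fin.last n)))) =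
        uget r + (us (.C 3 n) + us (.F n)) := by
      simp only [uget_add, uget_C, uget_F, hl]
    have e2 : uget (r + ms vl) = uget r := by
      simp only [uget_add, uget_other vl rfl, add_zero]
    have hz : Zb (uget r + (us (.C 3 n) + us (.F n))) n ↔ Zb (uget r) n := by
      apply Zb_add' <;> intro i hi
      · have h1 : i ≠ n := by omega
        simp [us, h1]
      · simp [us]
    have hb1 : ∀ v : MVar n, isBar v = true →
        (r + (ms (vC false 3 (Fin.last n)) + ms (vF false (Fin.last n))) : Mon (MVar n)) v = r v := by
      intro v hv
      simp only [Finsupp.add_apply]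
      rw [ms_bar rfl hv, ms_bar rfl hv]
      rfl
    have hb2 : ∀ v : MVar n, isBar v = true → (r + ms vl : Mon (MVar n)) v = r v := by
      intro v hv
      simp only [Finsupp.add_apply]
      rw [ms_bar rfl hv]
      rfl
    rw [WW, WW, e1, e2, hz, Val_SF (by simp [us]; omega), Term, hz]
    simp +contextual only [hb1, hb2]
    simp [us, uind, Fin.forall_fin_succ]
    grind
  · refine ⟨ms (vC true 3 (Fin.last n)) + ms (vF true (Fin.last n)),
      ms (vC false 3 (Fin.last n)) + ms (vS false (Fin.last n)),
      by simp [X_ms, monomial_mul], fun r => iff_of_false ?_ ?_⟩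
    · exact WW_bar (vC true 3 (Fin.last n)) rfl (by simp)
    · apply WW_S hm
      simp [uget_add, uget_S, uget_C, us]
  · refine ⟨ms (vB true 3 (Fin.last n)) + ms (vC false 3 (Fin.last n)) + ms (vS false (Fin.last n)),
      ms (vC false 3 (Fin.last n)) + ms (vS false (Fin.last n)) + ms vb,
      by simp [X_ms, monomial_mul], fun r => iff_of_false ?_ ?_⟩
    · apply WW_S hm
      simp [uget_add, uget_S, us]; omega
    · apply WW_S hm
      simp [uget_add, uget_S, us]; omega
  · refine ⟨ms (vB true 3 (Fin.last n)) + ms (vC false 3 (Fin.last n)) + ms (vS false (Fin.last n)),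
      ms (vC false 3 (Fin.last n)) + ms (vS false (Fin.last n)) + ms vbb,
      by simp [X_ms, monomial_mul], fun r => iff_of_false ?_ ?_⟩
    · apply WW_S hm
      simp [uget_add, uget_S, us]; omega
    · apply WW_S hm
      simp [uget_add, uget_S, us]; omega
  · refine ⟨ms (vC true 3 (Fin.last n)) + ms (vS true (Fin.last n)), ms vs,
      by simp [X_ms, monomial_mul], fun r => iff_of_false ?_ ?_⟩
    · exact WW_bar (vC true 3 (Fin.last n)) rfl (by simp)
    · intro h
      have := h.2.1
      simp at this

theorem Bal_FF {n m1 m2 : ℕ} (hm : m1 + m2 < en n) (p : MPoly n) (hp : p ∈ FF n) :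
    Bal (WW n m1 m2) p := by
  rcases hp with ((hp | hp) | (hp | hp)) | hp
  · exact Bal_P0 p hp
  · obtain ⟨i, hi⟩ := Set.mem_iUnion.1 hp
    exact Bal_Pm i p hi
  · exact Bal_P0bar p hp
  · obtain ⟨i, hi⟩ := Set.mem_iUnion.1 hp
    exact Bal_Pmbar i p hi
  · exact Bal_GG hm p hp

/-- State variables. -/
def isSt {n : ℕ} : MVar n → Bool
  | .vS _ _ => true
  | .vF _ _ => true
  | .vs => true
  | .vl => true
  | _ => false

theorem Bal_single {n : ℕ} {g : Mon (MVar n)} (hg : ∀ x, isSt x = true → g x = 0) {p : MPoly n}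
    (t u : Mon (MVar n)) (x y : MVar n)
    (hp : p = monomial t 1 + monomial u 1) (hx : isSt x = true) (hy : isSt y = true)
    (ht : t x ≠ 0) (hu : u y ≠ 0) : Bal (fun τ => τ = g) p := by
  refine ⟨t, u, hp, fun r => iff_of_false ?_ ?_⟩
  · rintro rfl
    have := hg x hx
    simp at this
    omega
  · rintro rfl
    have := hg y hy
    simp at this
    omega

theorem Bal_FF0 {n : ℕ} {g : Mon (MVar n)} (hg : ∀ x, isSt x = true → g x = 0) (p : MPoly n)
    (hp : p ∈ FF n) : Bal (fun τ => τ = g) p := by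
  have h0 : ∀ b, p ∈ P0 n b → Bal (fun τ => τ = g) p := by
    rintro b ⟨j, rfl⟩
    refine Bal_single hg (2 • ms (vB b j 0) + ms (vC b j 0) + ms (vF b 0))
      (ms (vC b j 0) + ms (vS b 0)) (vF b 0) (vS b 0) ?_ rfl rfl (by simp) (by simp)
    simp [X_ms, monomial_mul, monomial_pow]
  have h1 : ∀ b i, p ∈ Pm n b i → Bal (fun τ => τ = g) p := by
    intro b i hp
    rcases hp with (rfl | rfl | rfl | rfl | rfl | rfl) | ⟨l, rfl⟩
    · refine Bal_single hg (ms (vQ b 0 i.succ) + ms (vC b 0 i.castSucc) + ms (vS b i.castSucc))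
        (ms (vS b i.succ)) (vS b i.castSucc) (vS b i.succ) ?_ rfl rfl (by simp) (by simp)
      simp [X_ms, monomial_mul]
    · refine Bal_single hg (ms (vQ b 1 i.succ) + ms (vC b 1 i.castSucc) + ms (vS b i.castSucc))
        (ms (vQ b 0 i.succ) + ms (vB b 0 i.castSucc) + ms (vC b 0 i.castSucc) + ms (vF b i.castSucc)) (vS b i.castSucc) (vF b i.castSucc) ?_ rfl rfl (by simp) (by simp)
      simp [X_ms, monomial_mul]
    · refine Bal_single hg (ms (vQ b 2 i.succ) + ms (vC b 2 i.castSucc) + ms (vF b i.castSucc))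
        (ms (vQ b 1 i.succ) + ms (vC b 1 i.castSucc) + ms (vF b i.castSucc)) (vF b i.castSucc) (vF b i.castSucc) ?_ rfl rfl (by simp) (by simp)
      simp [X_ms, monomial_mul]
    · refine Bal_single hg (ms (vQ b 2 i.succ) + ms (vB b 0 i.castSucc) + ms (vC b 2 i.castSucc) + ms (vS b i.castSucc))
        (ms (vQ b 1 i.succ) + ms (vB b 3 i.castSucc) + ms (vC b 1 i.castSucc) + ms (vS b i.castSucc)) (vS b i.castSucc) (vS b i.castSucc) ?_ rfl rfl (by simp) (by simp)
      simp [X_ms, monomial_mul]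
    · refine Bal_single hg (ms (vQ b 3 i.succ) + ms (vB b 3 i.castSucc) + ms (vC b 3 i.castSucc) + ms (vF b i.castSucc))
        (ms (vQ b 2 i.succ) + ms (vC b 2 i.castSucc) + ms (vS b i.castSucc)) (vF b i.castSucc) (vS b i.castSucc) ?_ rfl rfl (by simp) (by simp)
      simp [X_ms, monomial_mul]
    · refine Bal_single hg (ms (vQ b 3 i.succ) + ms (vC b 3 i.castSucc) + ms (vS b i.castSucc))
        (ms (vF b i.succ)) (vS b i.castSucc) (vF b i.succ) ?_ rfl rfl (by simp) (by simp)
      simp [X_ms, monomial_mul]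
    · refine Bal_single hg (ms (vQ b 1 i.succ) + ms (vB b 2 i.castSucc) + ms (vB b l i.succ) + ms (vC b l i.succ) + ms (vF b i.castSucc))
        (ms (vQ b 1 i.succ) + ms (vB b 1 i.castSucc) + ms (vC b l i.succ) + ms (vF b i.castSucc)) (vF b i.castSucc) (vF b i.castSucc) ?_ rfl rfl (by simp) (by simp)
      simp [X_ms, monomial_mul]
  rcases hp with ((hp | hp) | (hp | hp)) | hp
  · exact h0 _ hp
  · obtain ⟨i, hi⟩ := Set.mem_iUnion.1 hp
    exact h1 _ i hi
  · exact h0 _ hp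
  · obtain ⟨i, hi⟩ := Set.mem_iUnion.1 hp
    exact h1 _ i hi
  · rcases hp with rfl | rfl | rfl | rfl | rfl | rfl | rfl
    · refine Bal_single hg (ms (vB false 3 (Fin.last n)) + ms vl + ms vb)
        (ms vl + ms vc) vl vl ?_ rfl rfl (by simp) (by simp)
      simp [X_ms, monomial_mul]
    · refine Bal_single hg (ms (vB false 3 (Fin.last n)) + ms vl + ms vbb)
        (ms vl + ms vcb) vl vl ?_ rfl rfl (by simp) (by simp)
      simp [X_ms, monomial_mul]
    · refine Bal_single hg (ms (vC false 3 (Fin.last n)) + ms (vF false (Fin.last n)))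
        (ms vl) (vF false (Fin.last n)) vl ?_ rfl rfl (by simp) (by simp)
      simp [X_ms, monomial_mul]
    · refine Bal_single hg (ms (vC true 3 (Fin.last n)) + ms (vF true (Fin.last n)))
        (ms (vC false 3 (Fin.last n)) + ms (vS false (Fin.last n))) (vF true (Fin.last n)) (vS false (Fin.last n)) ?_ rfl rfl (by simp) (by simp)
      simp [X_ms, monomial_mul]
    · refine Bal_single hg (ms (vB true 3 (Fin.last n)) + ms (vC false 3 (Fin.last n)) + ms (vS false (Fin.last n)))
        (ms (vC false 3 (Fin.last n)) + ms (vS false (Fin.last n)) + ms vb) (vS false (Fin.last n)) (vS false (Fin.last n)) ?_ rfl rfl (by simp) (by simp)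
      simp [X_ms, monomial_mul]
    · refine Bal_single hg (ms (vB true 3 (Fin.last n)) + ms (vC false 3 (Fin.last n)) + ms (vS false (Fin.last n)))
        (ms (vC false 3 (Fin.last n)) + ms (vS false (Fin.last n)) + ms vbb) (vS false (Fin.last n)) (vS false (Fin.last n)) ?_ rfl rfl (by simp) (by simp)
      simp [X_ms, monomial_mul]
    · refine Bal_single hg (ms (vC true 3 (Fin.last n)) + ms (vS true (Fin.last n)))
        (ms vs) (vS true (Fin.last n)) vs ?_ rfl rfl (by simp) (by simp)
      simp [X_ms, monomial_mul]

/-- The functional adding up the coefficients of the monomials in `W`. -/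
noncomputable def phi {n : ℕ} (W : Mon (MVar n) → Prop) : MPoly n →ₗ[ZMod 2] ZMod 2 :=
  open Classical in
  (basisMonomials (MVar n) (ZMod 2)).constr (ZMod 2) (fun t => if W t then (1 : ZMod 2) else 0)

open Classical in
theorem phi_monomial {n : ℕ} (W : Mon (MVar n) → Prop) (t : Mon (MVar n)) (c : ZMod 2) :
    phi W (monomial t c) = if W t then c else 0 := by
  have h : phi W (monomial t 1) = if W t then (1 : ZMod 2) else 0 := by
    have := (basisMonomials (MVar n) (ZMod 2)).constr_basis (ZMod 2)
      (fun t => if W t then (1 : ZMod 2) else 0) t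
    simpa [phi] using this
  have h2 : (monomial t c : MPoly n) = c • monomial t 1 := by simp [smul_monomial]
  rw [h2, map_smul, h]
  simp

theorem phi_span {n : ℕ} (W : Mon (MVar n) → Prop) (hW : ∀ p ∈ FF n, Bal W p) (p : MPoly n)
    (hp : p ∈ Ideal.span (FF n)) : phi W p = 0 := by
  suffices h : ∀ a, phi W (a * p) = 0 by simpa using h 1
  induction hp using Submodule.span_induction with
  | mem x hx =>
    obtain ⟨t, u, rfl, h⟩ := hW x hx
    intro a
    induction a using MvPolynomial.induction_on' with
    | monomial r c =>
      rw [mul_add, monomial_mul, monomial_mul, map_add, phi_monomial, phi_monomial]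
      by_cases hw : W (r + u)
      · rw [if_pos ((h r).2 hw), if_pos hw]
        exact CharTwo.add_self_eq_zero (R := ZMod 2) _
      · rw [if_neg (fun hc => hw ((h r).1 hc)), if_neg hw, add_zero]
    | add p q hp hq => rw [add_mul, map_add, hp, hq, add_zero]
  | zero => simp
  | add x y _ _ hx hy => intro a; rw [mul_add, map_add, hx, hy, add_zero]
  | smul b x _ hx => intro a; rw [smul_eq_mul, ← mul_assoc]; exact hx _

theorem lex_total {n : ℕ} (t u : Mon (MVar n)) : lexLe n t u ∨ lexLe n u t := by
  classical
  by_cases h : t = u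
  · exact Or.inl (Or.inl h)
  have hne : ((t.support ∪ u.support).filter (fun x => t x ≠ u x)).Nonempty := by
    obtain ⟨x, hx⟩ := Finsupp.ne_iff.1 h
    refine ⟨x, ?_⟩
    simp only [Finset.mem_filter, Finset.mem_union, Finsupp.mem_support_iff]
    exact ⟨by omega, hx⟩
  obtain ⟨x, hx, hmax⟩ := Finset.exists_max_image _ (vrank n) hne
  have hag : ∀ y, vrank n x < vrank n y → t y = u y := by
    intro y hy
    by_contra hc
    have := hmax y (by
      simp only [Finset.mem_filter, Finset.mem_union, Finsupp.mem_support_iff]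
      exact ⟨by omega, hc⟩)
    omega
  have hxne := (Finset.mem_filter.1 hx).2
  rcases Nat.lt_or_gt_of_ne hxne with h1 | h1
  · exact Or.inl (Or.inr ⟨x, h1, hag⟩)
  · exact Or.inr (Or.inr ⟨x, h1, fun y hy => (hag y hy).symm⟩)

theorem vrank_aux {N a b i j : ℕ} (hi : i < N) (hj : j < N) (h : a * N + i = b * N + j) :
    a = b ∧ i = j := by
  have h1 : a = b := by
    have := congrArg (· / N) h
    have hN : 0 < N := by omega
    simpa [Nat.add_div_of_dvd_right, Nat.div_eq_of_lt hi, Nat.div_eq_of_lt hj,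
      Nat.mul_div_cancel _ hN] using this
  subst h1
  exact ⟨rfl, by omega⟩

theorem vrank_inj {n : ℕ} (x y : MVar n) (h : vrank n x = vrank n y) : x = y := by
  have bd : ∀ j : Fin 4, (j : ℕ) * (n+1) ≤ 3 * (n+1) :=
    fun j => Nat.mul_le_mul_right _ (by omega)
  have key : ∀ (j j' : Fin 4) (i i' : Fin (n+1)),
      (j : ℕ) * (n+1) + i = (j' : ℕ) * (n+1) + i' → j = j' ∧ i = i' := by
    intro j j' i i' h
    have := vrank_aux i.2 i'.2 h
    exact ⟨Fin.ext this.1, Fin.ext this.2⟩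
  have hbar : ∀ b : Bool, cond b (14 * (n+1)) 0 = 0 ∨ cond b (14 * (n+1)) 0 = 14 * (n+1) := by
    intro b; cases b <;> simp
  rcases x with _ | _ | _ | _ | _ | _ | ⟨b, i⟩ | ⟨b, i⟩ | ⟨b, j, i⟩ | ⟨b, j, i⟩ | ⟨b, j, i⟩ <;>
  rcases y with _ | _ | _ | _ | _ | _ | ⟨b', i'⟩ | ⟨b', i'⟩ | ⟨b', j', i'⟩ | ⟨b', j', i'⟩ |
    ⟨b', j', i'⟩ <;>
  simp only [vrank] at h <;>
  (try have q1 := hbar b) <;> (try have q2 := hbar b') <;>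
  (try have q3 := bd j) <;> (try have q4 := bd j') <;>
  (try have q5 := i.2) <;> (try have q6 := i'.2) <;>
  first
  | rfl
  | (exfalso; omega)
  | (have hb : b = b' := by
      cases b <;> cases b' <;> simp only [cond_true, cond_false] at h ⊢ <;> omega
     subst hb
     first
     | (have hi : i = i' := Fin.ext (by omega)
        rw [hi])
     | (obtain ⟨hj, hi⟩ := key j j' i i' (by omega)
        rw [hi, hj]))

theorem lex_trans {n : ℕ} {t u v : Mon (MVar n)} (h1 : lexLe n t u) (h2 : lexLe n u v) :
    lexLe n t v := by
  rcases h1 with rfl | ⟨x, hx, hx'⟩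
  · exact h2
  rcases h2 with rfl | ⟨y, hy, hy'⟩
  · exact Or.inr ⟨x, hx, hx'⟩
  rcases Nat.lt_trichotomy (vrank n x) (vrank n y) with h | h | h
  · exact Or.inr ⟨y, (hx' y h).symm ▸ hy, fun z hz => (hx' z (h.trans hz)).trans (hy' z hz)⟩
  · have := vrank_inj x y h
    subst this
    exact Or.inr ⟨x, hx.trans hy, fun z hz => (hx' z hz).trans (hy' z hz)⟩
  · exact Or.inr ⟨x, (hy' x h) ▸ hx, fun z hz => (hx' z hz).trans (hy' z (h.trans hz))⟩

theorem exists_lex_max {n : ℕ} (s : Finset (Mon (MVar n))) (hs : s.Nonempty) :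
    ∃ t ∈ s, ∀ u ∈ s, lexLe n u t := by
  induction hs using Finset.Nonempty.cons_induction with
  | singleton a => exact ⟨a, by simp, by simp [lexLe]⟩
  | cons a s ha hs ih =>
    obtain ⟨t, ht, hmax⟩ := ih
    rcases lex_total a t with h | h
    · refine ⟨t, by simp [ht], fun u hu => ?_⟩
      rcases Finset.mem_cons.1 hu with rfl | hu
      · exact h
      · exact hmax u hu
    · refine ⟨a, by simp, fun u hu => ?_⟩
      rcases Finset.mem_cons.1 hu with rfl | hu
      · exact Or.inl rfl
      · exact lex_trans (hmax u hu) h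

theorem main_of {n : ℕ} (W : Mon (MVar n) → Prop) (hW : ∀ p ∈ FF n, Bal W p)
    (g : Mon (MVar n)) (hgW : W g) (hmin : ∀ u, W u → lexLe n u g → u = g) (f : MPoly n)
    (h : (monomial g 1 : MPoly n) + f ∈ Ideal.span (FF n)) :
    polyLe (lexLe n) (monomial g 1) f := by
  classical
  by_cases h0 : (monomial g 1 : MPoly n) + f = 0
  · left
    exact (CharTwo.add_eq_zero (R := MPoly n)).1 h0
  right
  have z2 : ∀ c : ZMod 2, c ≠ 0 → 1 + c ≠ 0 → False := by decide
  have z2' : ∀ c : ZMod 2, c = 0 → 1 + c ≠ 0 := by decide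
  have hsg : (monomial g 1 : MPoly n).support = {g} := by
    rw [support_monomial, if_neg one_ne_zero]
  obtain ⟨t, ht, hmax⟩ := exists_lex_max _ (support_nonempty.2 h0)
  have hsupp : ∀ u, ((u ∈ f.support ∧ u ∉ (monomial g 1 : MPoly n).support) ∨
      (u ∈ (monomial g 1 : MPoly n).support ∧ u ∉ f.support)) →
      u ∈ ((monomial g 1 : MPoly n) + f).support := by
    intro u hu
    rw [hsg] at hu
    simp only [mem_support_iff, Finset.mem_singleton, coeff_add, coeff_monomial] at hu ⊢
    rcases hu with ⟨h1, h2⟩ | ⟨rfl, h2⟩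
    · rw [if_neg (Ne.symm h2), zero_add]; exact h1
    · rw [if_pos rfl]; exact z2' _ (not_not.1 h2)
  by_cases htg : t = g
  · exfalso
    subst htg
    have h1 := phi_span W hW _ h
    rw [((monomial t 1 : MPoly n) + f).as_sum, map_sum, Finset.sum_eq_single t] at h1
    · rw [phi_monomial, if_pos hgW] at h1
      exact (mem_support_iff.1 ht) h1
    · intro u hu hut
      rw [phi_monomial, if_neg]
      exact fun hwu => hut (hmin u hwu (hmax u hu))
    · exact fun hc => absurd ht hc
  · refine ⟨t, ?_, ?_, fun u hu => hmax u (hsupp u hu)⟩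
    · rw [mem_support_iff, coeff_add, coeff_monomial, if_neg (Ne.symm htg), zero_add] at ht
      exact mem_support_iff.2 ht
    · rw [hsg]; simpa using htg

theorem stmt15 (n : ℕ) (g : Mon (MVar n)) (hg : g ∈ Dmon n) (f : MPoly n)
    (h : (monomial g 1 : MPoly n) + f ∈ Ideal.span (FF n)) :
    polyLe (lexLe n) (monomial g 1) f := by
  obtain ⟨j, m1, m2, hj, hm, rfl⟩ := hg
  rcases Nat.le_one_iff_eq_zero_or_eq_one.1 hj with rfl | rfl
  · refine main_of _ (fun p hp => Bal_FF0 ?_ p hp) _ rfl (fun u hu _ => hu) f h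
    intro x hx
    cases x <;> simp [isSt] at hx ⊢
  · refine main_of (WW n m1 m2) (Bal_FF (by omega)) _ ?_ ?_ f h
    · have hu : ∀ x, uget (Finsupp.single vl 1 + Finsupp.single vcb m1 + Finsupp.single vc m2 :
          Mon (MVar n)) x = 0 := by
        intro x
        cases x <;> simp [uget]
      refine ⟨?_, by simp, by simp, by simp, fun i _ => hu _, Or.inl ⟨by simp, ?_, hu _, hu _,
        fun i => hu _, ?_⟩⟩
      · intro v hv
        cases v <;> simp [isBar] at hv ⊢
      · exact ⟨fun i _ => ⟨hu _, hu _, fun j => ⟨hu _, hu _⟩⟩, fun i _ j => hu _⟩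
      · rw [hu]; simp
    · rintro u hu (rfl | ⟨x, hx, hx'⟩)
      · rfl
      exfalso
      have hr : vrank n x ≤ 3 := by
        cases x <;> simp at hx <;> simp [vrank]
      have hb : u vb = 0 := by
        rw [hx' vb (lt_of_le_of_lt hr (by simp [vrank]))]; simp
      have hbb : u vbb = 0 := by
        rw [hx' vbb (lt_of_le_of_lt hr (by simp [vrank]))]; simp
      have hC : u (vC false 3 (Fin.last n)) = 0 := by
        rw [hx' _ (lt_of_le_of_lt hr (by simp [vrank]; omega))]; simp
      obtain ⟨h1, h2, h3, h4, h5, h6⟩ := hu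
      rcases h6 with ⟨g1, _⟩ | ⟨_, g1⟩
      · cases x <;> simp at hx <;> omega
      · have := Val_C g1 3
        have hn : (⟨n, by omega⟩ : Fin (n+1)) = Fin.last n := rfl
        simp [uget, uind, hn, hC] at this
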